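/- If A ∈ ℝ^{n×n} is a nonsingular M-matrix (nonpositive off-diagonal entries and all eigenvalues with positive real part), then there exists a diagonal matrix W = diag(w_1,…,w_n) with w_i > 0 such that W·A + Aᵀ·W is symmetric positive definite. -/

import Mathlib

lemma mulVec_eq_sum_aux {n : ℕ} (A : Matrix (Fin n) (Fin n) ℝ) (x : Fin n → ℝ) (i : Fin n) :
    Matrix.mulVec A x i = ∑ j, A i j * x j := rfl

open Matrix in
lemma aux_pos {n : ℕ} (A : Matrix (Fin n) (Fin n) ℝ)
    (hZ : ∀ i j, i ≠ j → A i j ≤ 0)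
    (hd : ∀ t : ℝ, 0 ≤ t → (A + t • (1 : Matrix (Fin n) (Fin n) ℝ)).det ≠ 0) :
    ∃ x : Fin n → ℝ, (∀ i, 0 < x i) ∧ ∀ i, 0 < (A *ᵥ x) i := by
  let B : ℝ → Matrix (Fin n) (Fin n) ℝ := fun s => A + (s ^ 2) • (1 : Matrix (Fin n) (Fin n) ℝ)
  have hB : Continuous B := by fun_prop
  have hBd : ∀ s, (B s).det ≠ 0 := fun s => hd _ (sq_nonneg s)
  let x : ℝ → Fin n → ℝ := fun s => ((B s).det)⁻¹ • ((B s).adjugate *ᵥ (fun _ => 1))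
  have hx : Continuous x :=
    (hB.matrix_det.inv₀ hBd).smul (hB.matrix_adjugate.matrix_mulVec continuous_const)
  have hBx : ∀ s, B s *ᵥ x s = fun _ => 1 := by
    intro s
    simp only [x]
    rw [mulVec_smul, mulVec_mulVec, mul_adjugate, smul_mulVec, one_mulVec, smul_smul,
      inv_mul_cancel₀ (hBd s), one_smul]
  have hBZ : ∀ s i j, i ≠ j → B s i j ≤ 0 := by
    intro s i j hij
    simpa [B, one_apply_ne hij] using hZ i j hij
  have hpos : ∀ s, (∀ i, 0 ≤ x s i) → ∀ i, 0 < x s i := by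
    intro s h i
    rcases (h i).lt_or_eq with h1 | h1
    · exact h1
    exfalso
    have h2 := congrFun (hBx s) i
    have h3 : (B s *ᵥ x s) i ≤ 0 := by
      rw [mulVec_eq_sum_aux]
      apply Finset.sum_nonpos
      intro j _
      by_cases hij : i = j
      · subst hij; simp [← h1]
      · exact mul_nonpos_of_nonpos_of_nonneg (hBZ s i j hij) (h j)
    linarith
  have hset : {s | ∀ i, 0 < x s i} = {s | ∀ i, 0 ≤ x s i} := by
    ext s
    exact ⟨fun h i => (h i).le, hpos s⟩
  have hclopen : IsClopen {s | ∀ i, 0 < x s i} := by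
    constructor
    · rw [hset]
      simp only [Set.ofPred_forall]
      exact isClosed_iInter fun i => isClosed_le continuous_const ((continuous_apply i).comp hx)
    · simp only [Set.ofPred_forall]
      exact isOpen_iInter_of_finite fun i =>
        isOpen_lt continuous_const ((continuous_apply i).comp hx)
  have hne : {s | ∀ i, 0 < x s i}.Nonempty := by
    rw [hset]
    set M : ℝ := ∑ i, ∑ j, |A i j| with hM
    have hM0 : 0 ≤ M := Finset.sum_nonneg fun i _ => Finset.sum_nonneg fun j _ => abs_nonneg _
    refine ⟨Real.sqrt M, ?_⟩
    intro k
    have : Nonempty (Fin n) := ⟨k⟩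
    obtain ⟨i, hi⟩ := Finite.exists_min (x (Real.sqrt M))
    by_contra hk
    push Not at hk
    have hin : x (Real.sqrt M) i ≤ 0 := (hi k).trans hk.le
    have h2 := congrFun (hBx (Real.sqrt M)) i
    have h3 : (B (Real.sqrt M) *ᵥ x (Real.sqrt M)) i
        ≤ ∑ j, B (Real.sqrt M) i j * x (Real.sqrt M) i := by
      rw [mulVec_eq_sum_aux]
      apply Finset.sum_le_sum
      intro j _
      by_cases hij : i = j
      · subst hij; exact le_rfl
      · exact mul_le_mul_of_nonpos_left (hi j) (hBZ _ i j hij)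
    rw [← Finset.sum_mul] at h3
    have h4 : 0 ≤ ∑ j, B (Real.sqrt M) i j := by
      have : ∑ j, B (Real.sqrt M) i j = ∑ j, A i j + M := by
        simp [B, Finset.sum_add_distrib, one_apply, Real.sq_sqrt hM0]
      rw [this]
      have h5 : ∑ j, |A i j| ≤ M :=
        Finset.single_le_sum (f := fun i => ∑ j, |A i j|)
          (fun i _ => Finset.sum_nonneg fun j _ => abs_nonneg _) (Finset.mem_univ i)
      have h6 := Finset.abs_sum_le_sum_abs (fun j => A i j) Finset.univ
      have h7 := neg_abs_le (∑ j, A i j)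
      linarith
    have := mul_nonpos_of_nonneg_of_nonpos h4 hin
    linarith
  have huniv := hclopen.eq_univ hne
  have h0 : (0 : ℝ) ∈ {s | ∀ i, 0 < x s i} := by rw [huniv]; trivial
  refine ⟨x 0, h0, fun i => ?_⟩
  have h1 := congrFun (hBx 0) i
  have h2 : B 0 = A := by simp [B]
  rw [h2] at h1
  rw [h1]; exact one_pos

open Matrix in
lemma aux_posDef {n : ℕ} (S : Matrix (Fin n) (Fin n) ℝ) (hS : S.IsHermitian)
    (hZ : ∀ i j, i ≠ j → S i j ≤ 0) (x : Fin n → ℝ) (hx : ∀ i, 0 < x i)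
    (hSx : ∀ i, 0 < (S *ᵥ x) i) : S.PosDef := by
  refine Matrix.PosDef.of_dotProduct_mulVec_pos hS ?_
  intro z hz
  have hsym : ∀ i j, S i j = S j i := fun i j => by
    have := hS.apply i j
    simpa using this.symm
  -- twice the form
  have key : 2 * (star z ⬝ᵥ (S *ᵥ z)) =
      2 * ∑ i, (S *ᵥ x) i * (z i ^ 2 / x i)
       + ∑ i, ∑ j, (-S i j) * (x i * x j * (z i / x i - z j / x j) ^ 2) := by
    have e1 : star z ⬝ᵥ (S *ᵥ z) = ∑ i, ∑ j, S i j * (z i * z j) := by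
      simp only [dotProduct, mulVec, Finset.mul_sum, Pi.star_apply, star_trivial]
      exact Finset.sum_congr rfl fun i _ => Finset.sum_congr rfl fun j _ => by ring
    have e2 : ∑ i, (S *ᵥ x) i * (z i ^ 2 / x i) = ∑ i, ∑ j, S i j * (x j * (z i ^ 2 / x i)) := by
      simp only [dotProduct, mulVec, Finset.sum_mul]
      exact Finset.sum_congr rfl fun i _ => Finset.sum_congr rfl fun j _ => by ring
    have e3 : ∑ i, ∑ j, S i j * (x j * (z i ^ 2 / x i))
        = ∑ i, ∑ j, S i j * (x i * (z j ^ 2 / x j)) := by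
      rw [Finset.sum_comm]
      exact Finset.sum_congr rfl fun i _ => Finset.sum_congr rfl fun j _ => by rw [hsym i j]
    rw [e2, two_mul (∑ i, ∑ j, S i j * (x j * (z i ^ 2 / x i)))]
    nth_rewrite 2 [e3]
    rw [e1, Finset.mul_sum]
    simp only [Finset.mul_sum, ← Finset.sum_add_distrib]
    refine Finset.sum_congr rfl fun i _ => Finset.sum_congr rfl fun j _ => ?_
    have := (hx i).ne'
    have := (hx j).ne'
    field_simp
    ring
  have p1 : 0 < ∑ i, (S *ᵥ x) i * (z i ^ 2 / x i) := by
    obtain ⟨i, hi⟩ := Function.ne_iff.mp hz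
    have hi : z i ≠ 0 := hi
    refine Finset.sum_pos' (fun j _ => ?_) ⟨i, Finset.mem_univ i, ?_⟩
    · have := hx j; have := hSx j; positivity
    · have := hx i; have := hSx i; positivity
  have p2 : 0 ≤ ∑ i, ∑ j, (-S i j) * (x i * x j * (z i / x i - z j / x j) ^ 2) := by
    refine Finset.sum_nonneg fun i _ => Finset.sum_nonneg fun j _ => ?_
    by_cases hij : i = j
    · subst hij; simp
    · have := hx i; have := hx j
      exact mul_nonneg (by linarith [hZ i j hij]) (by positivity)
  linarith

lemma aux_det {n : ℕ} (A : Matrix (Fin n) (Fin n) ℝ)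
    (hM : ∀ μ ∈ ((A.map (Complex.ofReal)).charpoly).roots, 0 < μ.re) (t : ℝ) (ht : 0 ≤ t) :
    (A + t • (1 : Matrix (Fin n) (Fin n) ℝ)).det ≠ 0 := by
  intro h
  have h1 : A.charpoly.eval (-t) = 0 := by
    rw [Matrix.eval_charpoly]
    have : Matrix.scalar (Fin n) (-t) - A = -(A + t • (1 : Matrix (Fin n) (Fin n) ℝ)) := by
      rw [Matrix.smul_one_eq_diagonal]
      ext i j
      by_cases hij : i = j
      · subst hij; simp; ring
      · simp [hij]
    rw [this, Matrix.det_neg, h, mul_zero]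
  have h2 : (A.map (Complex.ofReal)).charpoly = A.charpoly.map Complex.ofRealHom :=
    Matrix.charpoly_map A Complex.ofRealHom
  have h3 := hM ((-t : ℝ) : ℂ) (by
    rw [Polynomial.mem_roots (Matrix.charpoly_monic _).ne_zero, Polynomial.IsRoot, h2]
    have := Polynomial.eval_map_apply (f := Complex.ofRealHom) (p := A.charpoly) (-t)
    rw [h1, map_zero] at this
    exact this)
  rw [Complex.ofReal_re] at h3
  linarith

/-- if `A` is a nonsingular M-matrix (nonpositive off-diagonal entries
and every eigenvalue with positive real part), then there exists a diagonal matrix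
`W = diag(w)` with positive entries such that `W·A + Aᵀ·W` is positive definite. -/
theorem stmt11 (n : ℕ)
    (A : Matrix (Fin n) (Fin n) ℝ)
    (hZ : ∀ i j, i ≠ j → A i j ≤ 0)
    (hM : ∀ μ ∈ ((A.map (Complex.ofReal)).charpoly).roots, 0 < μ.re) :
    ∃ w : Fin n → ℝ, (∀ i, 0 < w i) ∧
      (Matrix.diagonal w * A + A.transpose * Matrix.diagonal w).PosDef := by
  obtain ⟨x, hx, hAx⟩ := aux_pos A hZ (aux_det A hM)
  obtain ⟨y, hy, hAy⟩ := aux_pos A.transpose (fun i j hij => hZ j i hij.symm) (by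
    intro t ht h
    apply aux_det A hM t ht
    rw [← Matrix.det_transpose]
    simpa using h)
  have hw : ∀ i, 0 < y i / x i := fun i => div_pos (hy i) (hx i)
  refine ⟨fun i => y i / x i, hw, ?_⟩
  refine aux_posDef _ ?_ ?_ x hx ?_
  · ext i j
    simp [Matrix.mul_apply, Matrix.diagonal_apply]
    ring
  · intro i j hij
    have h1 := mul_nonpos_of_nonneg_of_nonpos (hw i).le (hZ i j hij)
    have h2 := mul_nonpos_of_nonneg_of_nonpos (hw j).le (hZ j i hij.symm)
    rw [Matrix.add_apply, Matrix.diagonal_mul, Matrix.mul_diagonal, Matrix.transpose_apply]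
    linarith
  · intro i
    have hWx : Matrix.mulVec (Matrix.diagonal fun i => y i / x i) x = y := by
      ext j
      rw [Matrix.mulVec_diagonal]
      exact div_mul_cancel₀ _ (hx j).ne'
    rw [Matrix.add_mulVec, ← Matrix.mulVec_mulVec, ← Matrix.mulVec_mulVec, hWx, Pi.add_apply,
      Matrix.mulVec_diagonal]
    exact add_pos (mul_pos (hw i) (hAx i)) (hAy i)
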